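/- Let S := ℂ[t₂,t₃][1/Δ] where Δ := 27t₃² − t₂³, let R be the localization at y of S[x,y]/(y² − 4x³ + t₂x + t₃), let d : R → Ω := Ω_{R/S} denote the universal derivation into the module of Kähler differentials, and set A := −36x⁴ + 15t₂x² − t₂² ∈ R. Then the following identities hold in Ω: (1) (1/(2y³))·dx = d(A/(Δy) + 9xy/Δ) − (3t₂/Δ)·(x/y)·dx − (9t₃/(2Δ))·(1/y)·dx; (2) (x/(2y³))·dx = d(Ax/(Δy) + 9x²y/Δ − 3t₂y/(2Δ)) + (9t₃/(2Δ))·(x/y)·dx + (t₂²/(4Δ))·(1/y)·dx; (3) (x²/(2y³))·dx = d(Ax²/(Δy) + 9x³y/Δ − 3t₂xy/(2Δ) + 9t₃y/(4Δ)) − (t₂²/(4Δ))·(x/y)·dx − (3t₂t₃/(8Δ))·(1/y)·dx. -/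

import Mathlib

/-!
On the curve, differentiating `y² = 4x³ - t₂x - t₃` gives `2y dy = (12x² - t₂) dx`, and `2`, `y`, `Δ`
are units of `R`. Hence for polynomials `P`, `Q` in `x` (with coefficients in `S`) the exact form
`d(P/(Δy) + Qy/Δ)` is an explicit multiple of `dx/(2Δy³)`, see `d_form`. Each identity thus becomes
an equality of coefficients of `dx`, and after clearing the denominator `2Δy³` it is an identity of
polynomials in `x`, `t₂`, `t₃`, obtained by substituting `4x³ - t₂x - t₃` for `y²`.
-/

open MvPolynomial

noncomputable section

/-- The polynomial ring `ℂ[t₂,t₃]`. -/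
abbrev S0 := MvPolynomial (Fin 2) ℂ

/-- `Δ := 27t₃² − t₂³ ∈ ℂ[t₂,t₃]`. -/
def ΔS : S0 := 27 * (X 1) ^ 2 - (X 0) ^ 3

/-- The base ring `S := ℂ[t₂,t₃][1/Δ]`. -/
def Sbase : Type := Localization (Submonoid.powers ΔS)

instance : CommRing Sbase := inferInstanceAs (CommRing (Localization (Submonoid.powers ΔS)))
instance : Algebra S0 Sbase := inferInstanceAs (Algebra S0 (Localization (Submonoid.powers ΔS)))

/-- The polynomial ring `S[x,y]`, with `x = X 0`, `y = X 1`. -/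
abbrev Q := MvPolynomial (Fin 2) Sbase

/-- The Weierstrass polynomial `y² − 4x³ + t₂x + t₃ ∈ S[x,y]`. -/
def W : Q := (X 1) ^ 2 - 4 * (X 0) ^ 3 + C (algebraMap S0 Sbase (X 0)) * (X 0)
  + C (algebraMap S0 Sbase (X 1))

/-- The affine curve ring `S[x,y]/(y² − 4x³ + t₂x + t₃)`. -/
def Rq : Type := Q ⧸ Ideal.span {W}

instance : CommRing Rq := Ideal.Quotient.commRing _
instance : Algebra Sbase Rq := Ideal.Quotient.algebra _

/-- The class of `y` in the curve ring. -/
def yq : Rq := Ideal.Quotient.mk _ (X 1)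

/-- `R` is the localization at `y` of `S[x,y]/(y² − 4x³ + t₂x + t₃)`. -/
def Rr : Type := Localization (Submonoid.powers yq)

instance : CommRing Rr := inferInstanceAs (CommRing (Localization (Submonoid.powers yq)))
instance : Algebra Rq Rr := inferInstanceAs (Algebra Rq (Localization (Submonoid.powers yq)))
instance : Algebra Sbase Rr := ((algebraMap Rq Rr).comp (algebraMap Sbase Rq)).toAlgebra

/-- The universal derivation `d : R → Ω_{R/S}`. -/
def D : Derivation Sbase Rr (Ω[Rr⁄Sbase]) := KaehlerDifferential.D Sbase Rr

def x : Rr := algebraMap Rq Rr (Ideal.Quotient.mk _ (X 0))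
def y : Rr := algebraMap Rq Rr yq
def t2 : Rr := algebraMap Sbase Rr (algebraMap S0 Sbase (X 0))
def t3 : Rr := algebraMap Sbase Rr (algebraMap S0 Sbase (X 1))
/-- `Δ = 27t₃² − t₂³` as an element of `R`. -/
def Δ : Rr := 27 * t3 ^ 2 - t2 ^ 3
/-- `A := −36x⁴ + 15t₂x² − t₂² ∈ R`. -/
def A : Rr := -36 * x ^ 4 + 15 * t2 * x ^ 2 - t2 ^ 2

lemma derivation_inverse_eq_zero {S R M : Type*} [CommRing S] [CommRing R] [Algebra S R]
    [AddCommGroup M] [Module R M] [Module S M] (d : Derivation S R M) {a b : R}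
    (hab : a * b = 1) (ha : d a = 0) : d b = 0 := by
  have e := congrArg d hab
  rw [Derivation.leibniz, ha, smul_zero, add_zero, Derivation.map_one_eq_zero] at e
  have e' := congrArg (fun m => b • m) e
  simpa only [smul_smul, mul_comm b a, hab, one_smul, smul_zero] using e'

/-- The differential of `P/(Δy) + Qy/Δ`, for a derivation `d` into a module and `Δ` a constant of
`d`. Here `i`, `j`, `h` are the inverses of `y`, `Δ`, `2`, and `ω` plays the role of `dx`: the
primed letters are the derivatives of `f = y²`, `P` and `Q` with respect to `x`. -/
lemma d_form {S R M : Type*} [CommRing S] [CommRing R] [Algebra S R] [AddCommGroup M]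
    [Module R M] [Module S M] (d : Derivation S R M)
    {ω : M} {y i Δ j h f f' P P' Q Q' : R}
    (hy : y * i = 1) (hΔ : Δ * j = 1) (h2 : 2 * h = 1) (hdΔ : d Δ = 0)
    (hf : y ^ 2 = f) (hdf : d f = f' • ω) (hP : d P = P' • ω) (hQ : d Q = Q' • ω) :
    d (P * (j * i) + Q * y * j) =
      (h * j * i ^ 3 * (2 * P' * f - P * f' + 2 * Q' * f ^ 2 + Q * f' * f)) • ω := by
  have hj : d j = 0 := derivation_inverse_eq_zero d hΔ hdΔ
  have hdy : d y = (h * i * f') • ω := by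
    have e := congrArg d hf
    rw [pow_two, Derivation.leibniz, hdf, ← add_smul] at e
    have e' := congrArg (fun m => (h * i) • m) e
    simp only [smul_smul] at e'
    rw [← e', show h * i * (y + y) = 1 by linear_combination (2 * h) * hy + h2, one_smul]
  have hdi : d i = (-(h * i ^ 3 * f')) • ω := by
    have e := congrArg d hy
    rw [Derivation.leibniz, hdy, Derivation.map_one_eq_zero] at e
    have e' := congrArg (fun m => i • m) e
    simp only [smul_add, smul_smul, smul_zero, mul_comm i y, hy, one_smul] at e'
    rw [eq_neg_of_add_eq_zero_left e', ← neg_smul]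
    ring_nf
  simp only [map_add, Derivation.leibniz, hj, hdi, hdy, hP, hQ, smul_smul, smul_zero,
    ← add_smul, zero_add, add_zero]
  congr 1
  subst hf
  -- An identity in the commutative ring `R` modulo the relations `2h = 1` and `yi = 1`.
  grind

/-- The element `2` is invertible already in `ℂ`, hence in `R`. -/
lemma isUnit_two_Rr : IsUnit (2 : Rr) := by
  have e : IsUnit (2 : ℂ) := (two_ne_zero).isUnit
  have e' := e.map (((algebraMap Sbase Rr).comp (algebraMap S0 Sbase)).comp
    (MvPolynomial.C : ℂ →+* S0))
  simpa only [RingHom.comp_apply, map_ofNat] using e'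

lemma isUnit_y : IsUnit y :=
  IsLocalization.map_units (M := Submonoid.powers yq) (Localization (Submonoid.powers yq))
    ⟨yq, Submonoid.mem_powers yq⟩

lemma isUnit_Δ : IsUnit Δ := by
  have e : IsUnit (algebraMap S0 Sbase ΔS) :=
    IsLocalization.map_units (M := Submonoid.powers ΔS) (Localization (Submonoid.powers ΔS))
      ⟨ΔS, Submonoid.mem_powers ΔS⟩
  simpa only [ΔS, Δ, t2, t3, map_sub, map_mul, map_pow, map_ofNat] using e.map (algebraMap Sbase Rr)

lemma curve_eq : y ^ 2 = 4 * x ^ 3 - t2 * x - t3 := by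
  have e : (Ideal.Quotient.mk (Ideal.span {W}) W : Rq) = 0 :=
    Ideal.Quotient.eq_zero_iff_mem.2 (Ideal.mem_span_singleton_self W)
  have e' := (congrArg (algebraMap Rq Rr) e).trans (map_zero (algebraMap Rq Rr))
  have k : algebraMap Rq Rr (Ideal.Quotient.mk (Ideal.span {W}) W)
      = y ^ 2 - 4 * x ^ 3 + t2 * x + t3 := by
    let φ : Q →+* Rr := (algebraMap Rq Rr).comp (Ideal.Quotient.mk (Ideal.span {W}) : Q →+* Rq)
    have h2 : φ (C (algebraMap S0 Sbase (X 0))) = t2 := rfl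
    have h3 : φ (C (algebraMap S0 Sbase (X 1))) = t3 := rfl
    have hx : φ (X 0) = x := rfl
    have hy : φ (X 1) = y := rfl
    change φ W = _
    simp only [W, map_add, map_sub, map_mul, map_pow, h2, h3, hx, hy, map_ofNat]
  rw [k] at e'
  linear_combination e'

lemma D_t2 : D t2 = 0 := D.map_algebraMap _

lemma D_t3 : D t3 = 0 := D.map_algebraMap _

lemma D_ofNat (n : ℕ) [n.AtLeastTwo] : D (ofNat(n) : Rr) = 0 := by
  have e : D (algebraMap Sbase Rr (OfNat.ofNat n)) = 0 := D.map_algebraMap _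
  rwa [map_ofNat] at e

lemma D_Δ : D Δ = 0 := by
  simp only [Δ, map_sub, Derivation.leibniz, Derivation.leibniz_pow, D_ofNat, D_t2, D_t3,
    smul_zero, add_zero, sub_zero]

lemma D_x_pow (n : ℕ) : D (x ^ n) = (n * x ^ (n - 1)) • D x := by
  rw [Derivation.leibniz_pow, mul_smul, Nat.cast_smul_eq_nsmul]

lemma D_t2_sq : D (t2 ^ 2) = 0 := by
  rw [Derivation.leibniz_pow, D_t2, smul_zero, smul_zero]

lemma D_cubic : D (4 * x ^ 3 - t2 * x - t3) = (12 * x ^ 2 - t2) • D x := by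
  simp only [map_sub, Derivation.leibniz, D_x_pow, D_ofNat, D_t2, D_t3,
    smul_zero, add_zero, sub_zero, smul_smul, ← sub_smul]
  congr 1
  push_cast
  ring

lemma D_A : D A = (-144 * x ^ 3 + 30 * t2 * x) • D x := by
  have e : A = 15 * t2 * x ^ 2 - 36 * x ^ 4 - t2 ^ 2 := by rw [A]; ring
  simp only [e, map_sub, Derivation.leibniz, D_x_pow, D_t2_sq, D_ofNat, D_t2,
    smul_zero, add_zero, sub_zero, smul_smul, ← sub_smul]
  congr 1
  push_cast
  ring

/-- The reduction identities for `xᵏdx/(2y³)`, `k = 0,1,2`, in the Kähler differentials of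
the localized Weierstrass curve ring, modulo exact forms. -/
theorem statement9 :
    ((Ring.inverse (2 * y ^ 3)) • D x
        = D (A * Ring.inverse (Δ * y) + 9 * x * y * Ring.inverse Δ)
          - (3 * t2 * Ring.inverse Δ * (x * Ring.inverse y)) • D x
          - (9 * t3 * Ring.inverse (2 * Δ) * Ring.inverse y) • D x) ∧
    ((x * Ring.inverse (2 * y ^ 3)) • D x
        = D (A * x * Ring.inverse (Δ * y) + 9 * x ^ 2 * y * Ring.inverse Δ
              - 3 * t2 * y * Ring.inverse (2 * Δ))
          + (9 * t3 * Ring.inverse (2 * Δ) * (x * Ring.inverse y)) • D x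
          + (t2 ^ 2 * Ring.inverse (4 * Δ) * Ring.inverse y) • D x) ∧
    ((x ^ 2 * Ring.inverse (2 * y ^ 3)) • D x
        = D (A * x ^ 2 * Ring.inverse (Δ * y) + 9 * x ^ 3 * y * Ring.inverse Δ
              - 3 * t2 * x * y * Ring.inverse (2 * Δ) + 9 * t3 * y * Ring.inverse (4 * Δ))
          - (t2 ^ 2 * Ring.inverse (4 * Δ) * (x * Ring.inverse y)) • D x
          - (3 * t2 * t3 * Ring.inverse (8 * Δ) * Ring.inverse y) • D x) := by
  have hy : y * Ring.inverse y = 1 := Ring.mul_inverse_cancel _ isUnit_y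
  have hΔ : Δ * Ring.inverse Δ = 1 := Ring.mul_inverse_cancel _ isUnit_Δ
  have h2 : (2 : Rr) * Ring.inverse 2 = 1 := Ring.mul_inverse_cancel _ isUnit_two_Rr
  have e4 : (4 : Rr) = 2 ^ 2 := by norm_num
  have e8 : (8 : Rr) = 2 ^ 3 := by norm_num
  have i1 : Ring.inverse (2 * y ^ 3) = Ring.inverse 2 * Ring.inverse y ^ 3 := by
    rw [Ring.mul_inverse_rev, Ring.inverse_pow, mul_comm]
  have i2 : Ring.inverse (Δ * y) = Ring.inverse Δ * Ring.inverse y := by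
    rw [Ring.mul_inverse_rev, mul_comm]
  have i3 : Ring.inverse (2 * Δ) = Ring.inverse 2 * Ring.inverse Δ := by
    rw [Ring.mul_inverse_rev, mul_comm]
  have i4 : Ring.inverse (4 * Δ) = Ring.inverse 2 ^ 2 * Ring.inverse Δ := by
    rw [Ring.mul_inverse_rev, e4, Ring.inverse_pow, mul_comm]
  have i5 : Ring.inverse (8 * Δ) = Ring.inverse 2 ^ 3 * Ring.inverse Δ := by
    rw [Ring.mul_inverse_rev, e8, Ring.inverse_pow, mul_comm]
  rw [i1, i2, i3, i4, i5]
  have hD2 : D (Ring.inverse 2) = 0 := derivation_inverse_eq_zero D h2 (D_ofNat 2)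
  have hD2' : D (Ring.inverse 2 ^ 2) = 0 := by
    rw [Derivation.leibniz_pow, hD2, smul_zero, smul_zero]
  have hi : Ring.inverse y = (4 * x ^ 3 - t2 * x - t3) * Ring.inverse y ^ 3 := by
    rw [← curve_eq]
    linear_combination (-Ring.inverse y * (y * Ring.inverse y + 1)) * hy
  -- In each final combination, `hΔ` and `hi` bring all coefficients of `dx` to the denominator
  -- `Δy³`, and `h2` halves the even coefficients that remain.
  refine ⟨?_, ?_, ?_⟩
  · have key := d_form D hy hΔ h2 D_Δ curve_eq D_cubic (P := A)
      (Q := 9 * x)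
      (P' := -144 * x ^ 3 + 30 * t2 * x)
      (Q' := 9)
      D_A
      (by rw [Derivation.leibniz, D_ofNat, smul_zero, add_zero])
    rw [show A * (Ring.inverse Δ * Ring.inverse y) + 9 * x * y * Ring.inverse Δ
      = (A) * (Ring.inverse Δ * Ring.inverse y)
        + (9 * x) * y * Ring.inverse Δ by ring, key]
    simp only [← sub_smul]
    congr 1
    simp only [A, Δ] at hΔ ⊢
    linear_combination (-(Ring.inverse 2 * Ring.inverse y ^ 3)) * hΔ
      + (3 * t2 * x + 9 * t3 * Ring.inverse 2) * Ring.inverse (27 * t3 ^ 2 - t2 ^ 3) * hi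
      - 3 * t2 * x * (4 * x ^ 3 - t2 * x - t3) * Ring.inverse (27 * t3 ^ 2 - t2 ^ 3) * Ring.inverse y ^ 3 * h2
  · have key := d_form D hy hΔ h2 D_Δ curve_eq D_cubic (P := A * x)
      (Q := 9 * x ^ 2 - 3 * t2 * Ring.inverse 2)
      (P' := A + (-144 * x ^ 3 + 30 * t2 * x) * x)
      (Q' := 18 * x)
      (by rw [Derivation.leibniz, D_A, smul_smul, ← add_smul, mul_comm x])
      (by
        simp only [map_sub, Derivation.leibniz, D_x_pow, D_ofNat, D_t2, hD2, smul_zero, add_zero, zero_add, sub_zero, smul_smul,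
          ← add_smul, ← sub_smul]
        congr 1
        push_cast
        ring)
    rw [show A * x * (Ring.inverse Δ * Ring.inverse y) + 9 * x ^ 2 * y * Ring.inverse Δ
      - 3 * t2 * y * (Ring.inverse 2 * Ring.inverse Δ)
      = (A * x) * (Ring.inverse Δ * Ring.inverse y)
        + (9 * x ^ 2 - 3 * t2 * Ring.inverse 2) * y * Ring.inverse Δ by ring, key]
    simp only [← add_smul]
    congr 1
    simp only [A, Δ] at hΔ ⊢
    linear_combination (-(x * Ring.inverse 2 * Ring.inverse y ^ 3)) * hΔ
      - (9 * t3 * x + t2 ^ 2 * Ring.inverse 2) * Ring.inverse 2 * Ring.inverse (27 * t3 ^ 2 - t2 ^ 3) * hi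
      + Ring.inverse 2 * Ring.inverse (27 * t3 ^ 2 - t2 ^ 3) * Ring.inverse y ^ 3 * (4 * x ^ 3 - t2 * x - t3)
        * (18 * t2 * x ^ 2 - 2 * t2 ^ 2) * h2
  · have key := d_form D hy hΔ h2 D_Δ curve_eq D_cubic (P := A * x ^ 2)
      (Q := 9 * x ^ 3 - 3 * t2 * x * Ring.inverse 2 + 9 * t3 * Ring.inverse 2 ^ 2)
      (P' := A * (2 * x) + (-144 * x ^ 3 + 30 * t2 * x) * x ^ 2)
      (Q' := 27 * x ^ 2 - 3 * t2 * Ring.inverse 2)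
      (by
        simp only [Derivation.leibniz, D_x_pow, D_A, smul_smul, ← add_smul]
        congr 1
        push_cast
        ring)
      (by
        simp only [map_add, map_sub, Derivation.leibniz, D_x_pow, D_ofNat, D_t2, D_t3, hD2,
          hD2', smul_zero, add_zero, zero_add, sub_zero, smul_smul,
          ← add_smul, ← sub_smul]
        congr 1
        push_cast
        ring)
    rw [show A * x ^ 2 * (Ring.inverse Δ * Ring.inverse y) + 9 * x ^ 3 * y * Ring.inverse Δ
      - 3 * t2 * x * y * (Ring.inverse 2 * Ring.inverse Δ) + 9 * t3 * y * (Ring.inverse 2 ^ 2 * Ring.inverse Δ)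
      = (A * x ^ 2) * (Ring.inverse Δ * Ring.inverse y)
        + (9 * x ^ 3 - 3 * t2 * x * Ring.inverse 2 + 9 * t3 * Ring.inverse 2 ^ 2) * y * Ring.inverse Δ by ring, key]
    simp only [← sub_smul]
    congr 1
    simp only [A, Δ] at hΔ ⊢
    linear_combination (-(x ^ 2 * Ring.inverse 2 * Ring.inverse y ^ 3)) * hΔ
      + (t2 ^ 2 * x + 3 * t2 * t3 * Ring.inverse 2) * Ring.inverse 2 ^ 2 * Ring.inverse (27 * t3 ^ 2 - t2 ^ 3) * hi
      + Ring.inverse 2 * Ring.inverse (27 * t3 ^ 2 - t2 ^ 3) * Ring.inverse y ^ 3 * (4 * x ^ 3 - t2 * x - t3)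
        * (30 * t2 * x ^ 3 - 4 * t2 ^ 2 * x - 3 * t2 * t3
          + (2 * Ring.inverse 2 + 1) * (3 * t2 * t3 - 27 * t3 * x ^ 2)) * h2

end
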